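/- Fix t > 0, set r = √(t/(1+t)), r' = 1/√(1+t), A = r'·exp(μ(r')), and B = r·exp((2/π)·𝒦(r)·𝒦'(r) − μ(r')). The function g(K) = A^{−K}·B^{1/K}·(η_K(t)/(t^{1/K}·(1+t)^{K−1/K}))^{1/2} is strictly decreasing on [1, ∞), with g(1) = B/A and g(K) → 1/4 as K → ∞, so g maps [1, ∞) onto (1/4, B/A]. In particular, for every K > 1, (1/16)·A^{2K}·B^{−2/K} < η_K(t)/(t^{1/K}·(1+t)^{K−1/K}) < A^{2(K−1)}·B^{2(1−1/K)} ≤ 16^{K−1}·c^{2(1−1/K)}, where c = (1/8)·exp(2·𝒦(1/√2)²/π). -/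

import Mathlib

open Set Filter

/-- Complete elliptic integral of the first kind. -/
noncomputable def ellK (r : ℝ) : ℝ :=
  ∫ θ in (0:ℝ)..(Real.pi / 2), (1 - r ^ 2 * Real.sin θ ^ 2) ^ (-(1/2) : ℝ)

/-- The Grötzsch modulus μ(r) = (π/2)·𝒦'(r)/𝒦(r). -/
noncomputable def mu (r : ℝ) : ℝ :=
  Real.pi / 2 * ellK (Real.sqrt (1 - r ^ 2)) / ellK r

open Real Topology MeasureTheory

/-!
Write `K, B` for `ellipticK, ellipticB` and `M` for `modulus`, all as functions of the parameter
`m = r²`, and `K', B'` for their values at `1 - m`. With `m₀ = 1 / (1 + t)`, the solution `u` of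
`μ u = κ μ (1 / √(1 + t))` corresponds to a parameter `m ∈ (0, m₀]`, which decreases from `m₀` to
`0` as the distortion constant `κ` increases from `1` to `∞`. In terms of `m`, `log (g κ)` becomes
`log (1 - m) / 2 - (M + log m / 2) + D / M` with `D = K'(m₀)² - M(m₀)²`. By the Legendre relation
its derivative is a positive multiple of `D - (K'² - M²)`, and `K'² - M²` is increasing because
`(1 - m) K³ < (π / 2)³` and `B ≤ 1`; so `log g` increases with `m`. As `m → 0` it tends to
`-log 4`, because `K = log 4 - log (1 - m) / 2 + o(1)` as `m → 1`.

The final estimate needs `A ≤ 4` and an upper bound for `A B`. The first holds since `M + log m / 2`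
decreases from `log 4`. The logarithm of `A B` is symmetric under `m ↔ 1 - m`, and increases on
`(0, 1 / 2]` because `ellipticB m * K' ≥ π / 2` there: by the Legendre relation `π / 2` is a
weighted mean of `ellipticB m * K'` and `K * ellipticB (1 - m)`, and the latter is the smaller one
since `ellipticB / ellipticK` decreases.
-/

/-- The weighted integral `∫₀^{π/2} w(θ) (1 - m sin² θ) ^ p dθ` in terms of the parameter
`m = r²`. All elliptic integrals below are instances of it, and `∂/∂m` only changes the weight and
the exponent. -/
noncomputable def legendreIntegral (p : ℝ) (w : ℝ → ℝ) (m : ℝ) : ℝ :=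
  ∫ θ in (0 : ℝ)..(π / 2), w θ * (1 - m * sin θ ^ 2) ^ p

/-- The complete elliptic integral of the first kind in terms of the parameter `m = r²`. -/
noncomputable def ellipticK (m : ℝ) : ℝ :=
  legendreIntegral (-(1 / 2)) (fun _ => 1) m

/-- The Jahnke–Emde integral `B = ∫₀^{π/2} cos² θ (1 - m sin² θ) ^ (-1/2) dθ`, which plays the role
of the integral of the second kind: `m B = E - (1 - m) K`. -/
noncomputable def ellipticB (m : ℝ) : ℝ :=
  legendreIntegral (-(1 / 2)) (fun θ => cos θ ^ 2) m

/-- The Jahnke–Emde integral `C = ∫₀^{π/2} sin² θ cos² θ (1 - m sin² θ) ^ (-3/2) dθ`, twice the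
derivative of `ellipticB`. -/
noncomputable def ellipticC (m : ℝ) : ℝ :=
  legendreIntegral (-(3 / 2)) (fun θ => sin θ ^ 2 * cos θ ^ 2) m

section LegendreIntegral

variable {p m : ℝ} {v w : ℝ → ℝ}

theorem one_sub_mul_sin_sq_pos (hm : m < 1) (θ : ℝ) : 0 < 1 - m * sin θ ^ 2 := by
  rcases (sq_nonneg (sin θ)).eq_or_lt with hs | hs
  · simp [← hs]
  · nlinarith [sin_sq_le_one θ]

theorem continuous_one_sub_mul_sin_sq_rpow (p : ℝ) (hm : m < 1) :
    Continuous fun θ => (1 - m * sin θ ^ 2) ^ p :=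
  Continuous.rpow_const (by fun_prop) fun θ => .inl (one_sub_mul_sin_sq_pos hm θ).ne'

theorem intervalIntegrable_legendreIntegrand (p : ℝ) (hw : Continuous w) (hm : m < 1) (a b : ℝ) :
    IntervalIntegrable (fun θ => w θ * (1 - m * sin θ ^ 2) ^ p) volume a b :=
  (hw.mul (continuous_one_sub_mul_sin_sq_rpow p hm)).intervalIntegrable a b

theorem legendreIntegral_add (hv : Continuous v) (hw : Continuous w) (hm : m < 1) :
    legendreIntegral p (fun θ => v θ + w θ) m =
      legendreIntegral p v m + legendreIntegral p w m := by
  simp only [legendreIntegral, add_mul]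
  exact intervalIntegral.integral_add (intervalIntegrable_legendreIntegrand p hv hm _ _)
    (intervalIntegrable_legendreIntegrand p hw hm _ _)

theorem legendreIntegral_const_mul (p a : ℝ) (w : ℝ → ℝ) (m : ℝ) :
    legendreIntegral p (fun θ => a * w θ) m = a * legendreIntegral p w m := by
  simp only [legendreIntegral, mul_assoc, intervalIntegral.integral_const_mul]

theorem legendreIntegral_add_one (p : ℝ) (w : ℝ → ℝ) (hm : m < 1) :
    legendreIntegral (p + 1) w m = legendreIntegral p (fun θ => w θ * (1 - m * sin θ ^ 2)) m := by
  refine intervalIntegral.integral_congr fun θ _ => ?_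
  simp only [rpow_add_one (one_sub_mul_sin_sq_pos hm θ).ne']
  ring

theorem legendreIntegral_pos (p : ℝ) (hw : Continuous w) (hm : m < 1)
    (hw_pos : ∀ θ ∈ Ioo 0 (π / 2), 0 < w θ) : 0 < legendreIntegral p w m :=
  intervalIntegral.intervalIntegral_pos_of_pos_on (intervalIntegrable_legendreIntegrand p hw hm _ _)
    (fun θ hθ => mul_pos (hw_pos θ hθ) (rpow_pos_of_pos (one_sub_mul_sin_sq_pos hm θ) p))
    (by positivity)

theorem hasDerivAt_legendreIntegral (p : ℝ) (hw : Continuous w) (hm : m < 1) :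
    HasDerivAt (legendreIntegral p w)
      (legendreIntegral (p - 1) (fun θ => -p * (sin θ ^ 2 * w θ)) m) m := by
  let dF : ℝ → ℝ → ℝ := fun x θ => -p * (sin θ ^ 2 * w θ) * (1 - x * sin θ ^ 2) ^ (p - 1)
  have lt_one : ∀ x ∈ Icc (m - 1) ((1 + m) / 2), x < 1 := fun x hx => by linarith [hx.2]
  have dF_continuousOn : ContinuousOn (Function.uncurry dF)
      (Icc (m - 1) ((1 + m) / 2) ×ˢ Icc 0 (π / 2)) := by
    refine ContinuousOn.mul (by fun_prop) (ContinuousOn.rpow_const (by fun_prop) fun z hz => ?_)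
    exact .inl (one_sub_mul_sin_sq_pos (lt_one _ hz.1) _).ne'
  obtain ⟨C, hC⟩ := (isCompact_Icc.prod isCompact_Icc).exists_bound_of_continuousOn dF_continuousOn
  refine (intervalIntegral.hasDerivAt_integral_of_dominated_loc_of_deriv_le
    (F' := dF) (bound := fun _ => C) (s := Icc (m - 1) ((1 + m) / 2))
    (Icc_mem_nhds (by linarith) (by linarith)) ?_ ?_ ?_ ?_ intervalIntegrable_const ?_).2
  · filter_upwards [Iio_mem_nhds hm] with x hx
    exact (hw.mul (continuous_one_sub_mul_sin_sq_rpow p hx)).aestronglyMeasurable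
  · exact intervalIntegrable_legendreIntegrand p hw hm _ _
  · exact (Continuous.mul (by fun_prop)
      (continuous_one_sub_mul_sin_sq_rpow (p - 1) hm)).aestronglyMeasurable
  · refine .of_forall fun θ hθ x hx => hC (x, θ) ⟨hx, ?_⟩
    rw [uIoc_of_le (by positivity)] at hθ
    exact Ioc_subset_Icc_self hθ
  · refine .of_forall fun θ _ x hx => ?_
    have base : HasDerivAt (fun x => 1 - x * sin θ ^ 2) (-(sin θ ^ 2)) x := by
      simpa using ((hasDerivAt_id x).mul_const (sin θ ^ 2)).const_sub 1
    refine ((base.rpow_const (p := p)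
      (.inl (one_sub_mul_sin_sq_pos (lt_one x hx) θ).ne')).const_mul (w θ)).congr_deriv ?_
    ring

/-- The weight which turns the integrand of `legendreIntegral p` into the derivative of
`sin θ cos θ (1 - m sin² θ) ^ (p + 1)`. -/
noncomputable def exactWeight (p m θ : ℝ) : ℝ :=
  (cos θ ^ 2 - sin θ ^ 2) * (1 - m * sin θ ^ 2) - 2 * (p + 1) * m * sin θ ^ 2 * cos θ ^ 2

theorem continuous_exactWeight (p m : ℝ) : Continuous (exactWeight p m) := by
  unfold exactWeight
  fun_prop

theorem legendreIntegral_exactWeight (p : ℝ) (hm : m < 1) :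
    legendreIntegral p (exactWeight p m) m = 0 := by
  have primitive : ∀ θ, HasDerivAt (fun θ => sin θ * cos θ * (1 - m * sin θ ^ 2) ^ (p + 1))
      (exactWeight p m θ * (1 - m * sin θ ^ 2) ^ p) θ := fun θ => by
    have base : HasDerivAt (fun θ => 1 - m * sin θ ^ 2) (-(m * (2 * sin θ * cos θ))) θ := by
      simpa using (((hasDerivAt_sin θ).pow 2).const_mul m).const_sub 1
    have base_pos := one_sub_mul_sin_sq_pos hm θ
    refine (((hasDerivAt_sin θ).mul (hasDerivAt_cos θ)).mul
      (base.rpow_const (p := p + 1) (.inl base_pos.ne'))).congr_deriv ?_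
    simp only [exactWeight, Pi.mul_apply, add_sub_cancel_right, rpow_add_one base_pos.ne']
    ring
  rw [legendreIntegral, intervalIntegral.integral_eq_sub_of_hasDerivAt (fun θ _ => primitive θ)
    (intervalIntegrable_legendreIntegrand p (continuous_exactWeight p m) hm _ _)]
  simp

theorem legendreIntegral_congr_of_exactWeight (hw : Continuous w) (hm : m < 1) (k : ℝ)
    (hvw : ∀ θ, v θ = w θ + k * exactWeight p m θ) :
    legendreIntegral p v m = legendreIntegral p w m := by
  rw [funext hvw, legendreIntegral_add hw ((continuous_exactWeight p m).const_mul k) hm,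
    legendreIntegral_const_mul, legendreIntegral_exactWeight p hm, mul_zero, add_zero]

end LegendreIntegral

section CompleteIntegrals

variable {m : ℝ}

theorem ellipticK_pos (hm : m < 1) : 0 < ellipticK m :=
  legendreIntegral_pos _ continuous_const hm fun _ _ => one_pos

theorem ellipticB_pos (hm : m < 1) : 0 < ellipticB m :=
  legendreIntegral_pos _ (by fun_prop) hm fun θ hθ =>
    pow_pos (cos_pos_of_mem_Ioo ⟨by linarith [hθ.1, pi_pos], hθ.2⟩) 2

theorem ellipticC_pos (hm : m < 1) : 0 < ellipticC m :=
  legendreIntegral_pos _ (by fun_prop) hm fun θ hθ =>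
    mul_pos (pow_pos (sin_pos_of_mem_Ioo ⟨hθ.1, by linarith [hθ.2, pi_pos]⟩) 2)
      (pow_pos (cos_pos_of_mem_Ioo ⟨by linarith [hθ.1, pi_pos], hθ.2⟩) 2)

theorem ellipticK_zero : ellipticK 0 = π / 2 := by
  simp [ellipticK, legendreIntegral]

theorem ellipticB_zero : ellipticB 0 = π / 4 := by
  simp [ellipticB, legendreIntegral, integral_cos_sq]
  ring

theorem hasDerivAt_ellipticK (hm : m < 1) :
    HasDerivAt ellipticK (ellipticB m / (2 * (1 - m))) m := by
  refine (hasDerivAt_legendreIntegral (-(1 / 2)) continuous_const hm).congr_deriv ?_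
  have ellipticB_eq :
      ellipticB m = (1 - m) * legendreIntegral (-(3 / 2)) (fun θ => sin θ ^ 2) m := by
    rw [ellipticB, show (-(1 / 2) : ℝ) = -(3 / 2) + 1 by norm_num, legendreIntegral_add_one _ _ hm,
      ← legendreIntegral_const_mul]
    refine legendreIntegral_congr_of_exactWeight (by fun_prop) hm 1 fun θ => ?_
    simp only [exactWeight, cos_sq']
    ring
  have : 1 - m ≠ 0 := by linarith
  rw [legendreIntegral_const_mul, ellipticB_eq, show (-(1 / 2) - 1 : ℝ) = -(3 / 2) by norm_num]
  simp only [mul_one]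
  field_simp

theorem hasDerivAt_ellipticB (hm : m < 1) : HasDerivAt ellipticB (ellipticC m / 2) m := by
  refine (hasDerivAt_legendreIntegral (-(1 / 2)) (by fun_prop) hm).congr_deriv ?_
  rw [legendreIntegral_const_mul, ellipticC, show (-(1 / 2) - 1 : ℝ) = -(3 / 2) by norm_num]
  ring

theorem ellipticK_eq (hm : m < 1) : ellipticK m = 2 * ellipticB m + m * ellipticC m := by
  rw [ellipticK, ellipticB, ellipticC, show (-(1 / 2) : ℝ) = -(3 / 2) + 1 by norm_num,
    legendreIntegral_add_one _ _ hm, legendreIntegral_add_one _ _ hm, ← legendreIntegral_const_mul,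
    ← legendreIntegral_const_mul, ← legendreIntegral_add (by fun_prop) (by fun_prop) hm]
  refine legendreIntegral_congr_of_exactWeight (by fun_prop) hm (-1) fun θ => ?_
  simp only [exactWeight, cos_sq']
  ring

theorem two_mul_ellipticB_lt_ellipticK (h0 : 0 < m) (hm : m < 1) :
    2 * ellipticB m < ellipticK m := by
  linarith [ellipticK_eq hm, mul_pos h0 (ellipticC_pos hm)]

theorem hasDerivAt_ellipticK_one_sub (h0 : 0 < m) :
    HasDerivAt (fun m => ellipticK (1 - m)) (-(ellipticB (1 - m) / (2 * m))) m := by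
  simpa using (hasDerivAt_ellipticK (m := 1 - m) (by linarith)).comp_const_sub 1 m

theorem hasDerivAt_ellipticB_one_sub (h0 : 0 < m) :
    HasDerivAt (fun m => ellipticB (1 - m)) (-(ellipticC (1 - m) / 2)) m :=
  (hasDerivAt_ellipticB (m := 1 - m) (by linarith)).comp_const_sub 1 m

theorem cos_mul_one_sub_mul_sin_sq_rpow_le_one (hm : m < 1) (θ : ℝ) :
    cos θ * (1 - m * sin θ ^ 2) ^ (-(1 / 2) : ℝ) ≤ 1 := by
  have base_pos := one_sub_mul_sin_sq_pos hm θ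
  have cos_le : cos θ ≤ √(1 - m * sin θ ^ 2) := by
    refine le_sqrt_of_sq_le ?_
    rw [cos_sq']
    nlinarith [sq_nonneg (sin θ)]
  rwa [rpow_neg base_pos.le, ← sqrt_eq_rpow, ← div_eq_mul_inv, div_le_one (sqrt_pos.2 base_pos)]

theorem ellipticB_le_one (hm : m < 1) : ellipticB m ≤ 1 := by
  calc ellipticB m ≤ ∫ θ in (0 : ℝ)..(π / 2), cos θ := by
        refine intervalIntegral.integral_mono_on (by positivity)
          (intervalIntegrable_legendreIntegrand _ (by fun_prop) hm _ _)
          (continuous_cos.intervalIntegrable _ _) fun θ hθ => ?_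
        beta_reduce
        have cos_nonneg : 0 ≤ cos θ := cos_nonneg_of_mem_Icc ⟨by linarith [hθ.1, pi_pos], hθ.2⟩
        rw [pow_two (cos θ), mul_assoc]
        exact mul_le_of_le_one_right cos_nonneg (cos_mul_one_sub_mul_sin_sq_rpow_le_one hm θ)
    _ = 1 := by simp

end CompleteIntegrals

section Monotonicity

variable {m x : ℝ} {n : ℕ}

theorem strictAntiOn_one_sub_mul_ellipticK_pow (hn : n < 4) :
    StrictAntiOn (fun m => (1 - m) * ellipticK m ^ n) (Ico 0 1) := by
  have hasDerivAt : ∀ x < 1, HasDerivAt (fun m => (1 - m) * ellipticK m ^ n)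
      (n * ellipticK x ^ (n - 1) * (ellipticB x / 2) - ellipticK x ^ n) x := fun x hx => by
    have : 1 - x ≠ 0 := by linarith
    refine (((hasDerivAt_id x).const_sub 1).mul ((hasDerivAt_ellipticK hx).pow n)).congr_deriv ?_
    simp only [id, Pi.pow_apply]
    field_simp
    ring
  refine strictAntiOn_of_hasDerivWithinAt_neg (convex_Ico 0 1)
    (fun x hx => (hasDerivAt x hx.2).continuousAt.continuousWithinAt)
    (fun x hx => (hasDerivAt x (interior_subset hx).2).hasDerivWithinAt) fun x hx => ?_
  rw [interior_Ico] at hx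
  have hK := ellipticK_pos hx.2
  rcases n with _ | n
  · simp
  have hn' : ((n + 1 : ℕ) : ℝ) < 4 := mod_cast hn
  have : (n + 1 : ℕ) * (ellipticB x / 2) < ellipticK x := by
    nlinarith [ellipticB_pos hx.2, two_mul_ellipticB_lt_ellipticK hx.1 hx.2]
  calc _ = ellipticK x ^ n * ((n + 1 : ℕ) * (ellipticB x / 2) - ellipticK x) := by
        rw [Nat.add_sub_cancel]; ring
    _ < 0 := mul_neg_of_pos_of_neg (pow_pos hK n) (by linarith)

theorem one_sub_mul_ellipticK_pow_lt (hn : n < 4) (h0 : 0 < m) (hm : m < 1) :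
    (1 - m) * ellipticK m ^ n < (π / 2) ^ n := by
  simpa [ellipticK_zero] using
    strictAntiOn_one_sub_mul_ellipticK_pow hn ⟨le_rfl, one_pos⟩ ⟨h0.le, hm⟩ h0

theorem one_sub_mul_sq_ellipticK_sub_ellipticB_le (h0 : 0 ≤ m) (hm : m < 1) :
    (1 - m) * (ellipticK m - ellipticB m) ^ 2 ≤ ellipticB m ^ 2 := by
  let f : ℝ → ℝ := fun m => (1 - m) * (ellipticK m - ellipticB m) ^ 2 - ellipticB m ^ 2
  have hasDerivAt : ∀ x < 1, HasDerivAt f (-(ellipticC x * ellipticK x)) x := fun x hx => by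
    have : 1 - x ≠ 0 := by linarith
    refine ((((hasDerivAt_id x).const_sub 1).mul
      (((hasDerivAt_ellipticK hx).sub (hasDerivAt_ellipticB hx)).pow 2)).sub
      ((hasDerivAt_ellipticB hx).pow 2)).congr_deriv ?_
    simp only [id, Pi.pow_apply, Pi.sub_apply, ellipticK_eq hx]
    field_simp
    ring
  have antitone : AntitoneOn f (Ico 0 1) :=
    antitoneOn_of_hasDerivWithinAt_nonpos (convex_Ico 0 1)
      (fun x hx => (hasDerivAt x hx.2).continuousAt.continuousWithinAt)
      (fun x hx => (hasDerivAt x (interior_subset hx).2).hasDerivWithinAt)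
      fun x hx => neg_nonpos.2 (mul_pos (ellipticC_pos (interior_subset hx).2)
        (ellipticK_pos (interior_subset hx).2)).le
  have f_zero : f 0 = 0 := by
    simp only [f, ellipticK_zero, ellipticB_zero]
    ring
  have := antitone ⟨le_rfl, one_pos⟩ ⟨h0, hm⟩ h0
  rw [f_zero] at this
  simpa [f] using this

theorem antitoneOn_ellipticB_div_ellipticK :
    AntitoneOn (fun m => ellipticB m / ellipticK m) (Ico 0 1) := by
  have hasDerivAt : ∀ x < 1, HasDerivAt (fun m => ellipticB m / ellipticK m)
      ((ellipticC x / 2 * ellipticK x - ellipticB x * (ellipticB x / (2 * (1 - x)))) /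
        ellipticK x ^ 2) x := fun x hx =>
    (hasDerivAt_ellipticB hx).div (hasDerivAt_ellipticK hx) (ellipticK_pos hx).ne'
  refine antitoneOn_of_hasDerivWithinAt_nonpos (convex_Ico 0 1)
    (fun x hx => (hasDerivAt x hx.2).continuousAt.continuousWithinAt)
    (fun x hx => (hasDerivAt x (interior_subset hx).2).hasDerivWithinAt) fun x hx => ?_
  rw [interior_Ico] at hx
  have hx' : 0 < 1 - x := by linarith [hx.2]
  refine div_nonpos_of_nonpos_of_nonneg ?_ (sq_nonneg _)
  rw [sub_nonpos, ← mul_div_assoc, le_div_iff₀ (by positivity)]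
  refine le_of_mul_le_mul_left ?_ hx.1
  calc x * (ellipticC x / 2 * ellipticK x * (2 * (1 - x)))
      = (1 - x) * (ellipticK x - ellipticB x) ^ 2 - ellipticB x ^ 2
        + x * (ellipticB x * ellipticB x) := by
        linear_combination -(1 - x) * ellipticK x * ellipticK_eq hx.2
    _ ≤ x * (ellipticB x * ellipticB x) := by
        linarith [one_sub_mul_sq_ellipticK_sub_ellipticB_le hx.1.le hx.2]

end Monotonicity

section LimitsAtOne

variable {m : ℝ} {w : ℝ → ℝ}

theorem eventually_mem_Ioo_nhdsLT_one : ∀ᶠ m in 𝓝[<] (1 : ℝ), m ∈ Ioo (0 : ℝ) 1 :=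
  Ioo_mem_nhdsLT one_pos

theorem tendsto_legendreIntegral_nhdsLT_one (hw : Continuous w)
    (hw_le : ∀ θ ∈ Icc (0 : ℝ) (π / 2), |w θ| ≤ cos θ) :
    Tendsto (legendreIntegral (-(1 / 2)) w) (𝓝[<] 1)
      (𝓝 (∫ θ in (0 : ℝ)..(π / 2), w θ * (cos θ)⁻¹)) := by
  refine intervalIntegral.tendsto_integral_filter_of_dominated_convergence (fun _ => (1 : ℝ))
    ?_ ?_ intervalIntegrable_const ?_
  · filter_upwards [self_mem_nhdsWithin] with m (hm : m < 1)
    exact (hw.mul (continuous_one_sub_mul_sin_sq_rpow _ hm)).aestronglyMeasurable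
  · filter_upwards [self_mem_nhdsWithin] with m hm
    refine .of_forall fun θ hθ => ?_
    rw [uIoc_of_le (by positivity)] at hθ
    have base_rpow_nonneg := rpow_nonneg (one_sub_mul_sin_sq_pos hm θ).le (-(1 / 2))
    rw [norm_mul, norm_eq_abs, norm_of_nonneg base_rpow_nonneg]
    exact (mul_le_mul_of_nonneg_right (hw_le θ (Ioc_subset_Icc_self hθ)) base_rpow_nonneg).trans
      (cos_mul_one_sub_mul_sin_sq_rpow_le_one hm θ)
  · filter_upwards [Measure.ae_ne volume (π / 2)] with θ hθ_ne hθ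
    rw [uIoc_of_le (by positivity)] at hθ
    have cos_pos : 0 < cos θ :=
      cos_pos_of_mem_Ioo ⟨by linarith [hθ.1, pi_pos], hθ.2.lt_of_ne hθ_ne⟩
    have base_tendsto : Tendsto (fun m => 1 - m * sin θ ^ 2) (𝓝[<] 1) (𝓝 (cos θ ^ 2)) :=
      tendsto_nhdsWithin_of_tendsto_nhds
        (Continuous.tendsto' (by fun_prop) _ _ (by rw [cos_sq', one_mul]))
    have inv_cos_eq : (cos θ)⁻¹ = (cos θ ^ 2) ^ (-(1 / 2) : ℝ) := by
      rw [rpow_neg (sq_nonneg _), ← sqrt_eq_rpow, sqrt_sq cos_pos.le]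
    rw [inv_cos_eq]
    exact (base_tendsto.rpow_const (.inl (by positivity))).const_mul _

theorem tendsto_ellipticB_nhdsLT_one : Tendsto ellipticB (𝓝[<] 1) (𝓝 1) := by
  have integral_eq : ∫ θ in (0 : ℝ)..(π / 2), cos θ ^ 2 * (cos θ)⁻¹ = 1 := by
    simp only [sq, mul_self_mul_inv, integral_cos, sin_pi_div_two, sin_zero, sub_zero]
  have abs_cos_sq_le : ∀ θ ∈ Icc (0 : ℝ) (π / 2), |cos θ ^ 2| ≤ cos θ := fun θ hθ => by
    have cos_nonneg : 0 ≤ cos θ := cos_nonneg_of_mem_Icc ⟨by linarith [hθ.1, pi_pos], hθ.2⟩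
    rw [abs_of_nonneg (sq_nonneg _), sq]
    exact mul_le_of_le_one_left cos_nonneg (cos_le_one θ)
  have := tendsto_legendreIntegral_nhdsLT_one (by fun_prop) abs_cos_sq_le
  rwa [integral_eq] at this

theorem integral_one_sub_sin_mul_inv_cos :
    ∫ θ in (0 : ℝ)..(π / 2), (1 - sin θ) * (cos θ)⁻¹ = log 2 := by
  have one_add_sin_pos : ∀ θ ∈ uIcc (0 : ℝ) (π / 2), 0 < 1 + sin θ := fun θ hθ => by
    rw [uIcc_of_le (by positivity)] at hθ
    linarith [sin_nonneg_of_nonneg_of_le_pi hθ.1 (by linarith [hθ.2, pi_pos])]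
  have integrand_eq : EqOn (fun θ => (1 - sin θ) * (cos θ)⁻¹) (fun θ => cos θ / (1 + sin θ))
      (uIcc 0 (π / 2)) := fun θ hθ => by
    have := one_add_sin_pos θ hθ
    -- At `θ = π / 2` both sides are `0`, the left one because `0⁻¹ = 0`.
    rcases eq_or_ne (cos θ) 0 with h | h
    · simp [h]
    · field_simp
      linarith [sin_sq_add_cos_sq θ]
  have primitive : ∀ θ ∈ uIcc (0 : ℝ) (π / 2),
      HasDerivAt (fun θ => log (1 + sin θ)) (cos θ / (1 + sin θ)) θ := fun θ hθ =>
    ((hasDerivAt_sin θ).const_add 1).log (one_add_sin_pos θ hθ).ne'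
  have integrable : IntervalIntegrable (fun θ => cos θ / (1 + sin θ)) volume 0 (π / 2) :=
    (ContinuousOn.div (by fun_prop) (by fun_prop)
      fun θ hθ => (one_add_sin_pos θ hθ).ne').intervalIntegrable
  rw [intervalIntegral.integral_congr integrand_eq,
    intervalIntegral.integral_eq_sub_of_hasDerivAt primitive integrable]
  norm_num

theorem legendreIntegral_sin (h0 : 0 < m) (hm : m < 1) :
    legendreIntegral (-(1 / 2)) sin m = (log (1 + √m) - log (1 - m) / 2) / √m := by
  have := sqrt_pos.2 h0
  have primitive : ∀ θ ∈ uIcc (0 : ℝ) (π / 2),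
      HasDerivAt (fun θ => -(log (√m * cos θ + √(1 - m * sin θ ^ 2)) / √m))
        (sin θ * (1 - m * sin θ ^ 2) ^ (-(1 / 2) : ℝ)) θ := fun θ hθ => by
    rw [uIcc_of_le (by positivity)] at hθ
    have cos_nonneg : 0 ≤ cos θ := cos_nonneg_of_mem_Icc ⟨by linarith [hθ.1, pi_pos], hθ.2⟩
    have base_pos := one_sub_mul_sin_sq_pos hm θ
    have hS : 0 < √(1 - m * sin θ ^ 2) := sqrt_pos.2 base_pos
    have base : HasDerivAt (fun θ => 1 - m * sin θ ^ 2) (-(√m ^ 2 * (2 * sin θ * cos θ))) θ := by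
      simpa [sq_sqrt h0.le] using (((hasDerivAt_sin θ).pow 2).const_mul m).const_sub 1
    have denom_pos : 0 < √m * cos θ + √(1 - m * sin θ ^ 2) := by positivity
    refine (((((hasDerivAt_cos θ).const_mul √m).add (base.sqrt base_pos.ne')).log
      denom_pos.ne').div_const √m).neg.congr_deriv ?_
    rw [rpow_neg base_pos.le, ← sqrt_eq_rpow]
    simp only [Pi.add_apply]
    generalize √(1 - m * sin θ ^ 2) = S at hS denom_pos ⊢
    field_simp
    ring
  rw [legendreIntegral, intervalIntegral.integral_eq_sub_of_hasDerivAt primitive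
    (intervalIntegrable_legendreIntegrand _ continuous_sin hm _ _)]
  simp only [cos_pi_div_two, sin_pi_div_two, cos_zero, sin_zero, one_pow, mul_one, mul_zero,
    zero_add, sub_zero, sqrt_one, log_sqrt (by linarith : 0 ≤ 1 - m), ne_eq, OfNat.ofNat_ne_zero,
    not_false_eq_true, zero_pow]
  ring_nf

theorem tendsto_one_sub_nhdsLT_one : Tendsto (fun m : ℝ => 1 - m) (𝓝[<] 1) (𝓝[>] 0) :=
  tendsto_nhdsWithin_iff.2 ⟨tendsto_nhdsWithin_of_tendsto_nhds
    (Continuous.tendsto' (by fun_prop) _ _ (sub_self 1)),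
    eventually_mem_nhdsWithin.mono fun _ hm => sub_pos.2 (mem_Iio.1 hm)⟩

theorem tendsto_one_sub_nhdsGT_zero : Tendsto (fun m : ℝ => 1 - m) (𝓝[>] 0) (𝓝[<] 1) :=
  tendsto_nhdsWithin_iff.2 ⟨tendsto_nhdsWithin_of_tendsto_nhds
    (Continuous.tendsto' (by fun_prop) _ _ (sub_zero 1)),
    eventually_mem_nhdsWithin.mono fun _ hm => sub_lt_self (1 : ℝ) (mem_Ioi.1 hm)⟩

theorem tendsto_mul_log_nhdsGT_zero : Tendsto (fun m => m * log m) (𝓝[>] 0) (𝓝 0) :=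
  tendsto_nhdsWithin_of_tendsto_nhds (continuous_mul_log.tendsto' _ _ (zero_mul _))

theorem tendsto_legendreIntegral_sin_add_log_nhdsLT_one :
    Tendsto (fun m => legendreIntegral (-(1 / 2)) sin m + log (1 - m) / 2) (𝓝[<] 1)
      (𝓝 (log 2)) := by
  have sqrt_tendsto : Tendsto sqrt (𝓝[<] 1) (𝓝 1) :=
    tendsto_nhdsWithin_of_tendsto_nhds (continuous_sqrt.tendsto' _ _ sqrt_one)
  have main_tendsto : Tendsto (fun m => log (1 + √m) / √m
      - (1 - m) * log (1 - m) / (2 * √m * (1 + √m))) (𝓝[<] 1) (𝓝 (log 2)) := by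
    have := (((sqrt_tendsto.const_add 1).log (by norm_num)).div sqrt_tendsto one_ne_zero).sub
      ((tendsto_mul_log_nhdsGT_zero.comp tendsto_one_sub_nhdsLT_one).div
        ((sqrt_tendsto.const_mul 2).mul (sqrt_tendsto.const_add 1)) (by norm_num))
    simpa [one_add_one_eq_two] using this
  refine main_tendsto.congr' ?_
  filter_upwards [eventually_mem_Ioo_nhdsLT_one] with m hm
  have hq : 0 < √m := sqrt_pos.2 hm.1
  rw [legendreIntegral_sin hm.1 hm.2]
  have one_sub_eq : 1 - m = (1 - √m) * (1 + √m) := by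
    linear_combination sq_sqrt hm.1.le
  generalize log (1 - m) = L
  rw [one_sub_eq]
  field_simp
  ring

-- Split the weight as `1 = (1 - sin) + sin`: the logarithmic singularity at `m = 1` sits in the
-- second summand, whose integral is elementary, while the first converges dominatedly.
theorem tendsto_ellipticK_add_log_nhdsLT_one :
    Tendsto (fun m => ellipticK m + log (1 - m) / 2) (𝓝[<] 1) (𝓝 (log 4)) := by
  have one_sub_sin_tendsto :
      Tendsto (legendreIntegral (-(1 / 2)) fun θ => 1 - sin θ) (𝓝[<] 1) (𝓝 (log 2)) := by
    rw [← integral_one_sub_sin_mul_inv_cos]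
    refine tendsto_legendreIntegral_nhdsLT_one (by fun_prop) fun θ hθ => ?_
    have sin_nonneg := sin_nonneg_of_nonneg_of_le_pi hθ.1 (by linarith [hθ.2, pi_pos])
    have cos_nonneg : 0 ≤ cos θ := cos_nonneg_of_mem_Icc ⟨by linarith [hθ.1, pi_pos], hθ.2⟩
    refine abs_le_of_sq_le_sq ?_ cos_nonneg
    nlinarith [sin_le_one θ, cos_sq' θ]
  have log_four : log 4 = log 2 + log 2 := by
    rw [← log_mul two_ne_zero two_ne_zero]
    norm_num
  rw [log_four]
  refine (one_sub_sin_tendsto.add tendsto_legendreIntegral_sin_add_log_nhdsLT_one).congr' ?_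
  filter_upwards [self_mem_nhdsWithin] with m hm
  rw [← add_assoc, ← legendreIntegral_add (by fun_prop) continuous_sin hm]
  simp only [sub_add_cancel, ellipticK]

theorem tendsto_one_sub_mul_ellipticK_nhdsLT_one :
    Tendsto (fun m => (1 - m) * ellipticK m) (𝓝[<] 1) (𝓝 0) := by
  have one_sub_tendsto := tendsto_nhds_of_tendsto_nhdsWithin tendsto_one_sub_nhdsLT_one
  have := (one_sub_tendsto.mul tendsto_ellipticK_add_log_nhdsLT_one).sub
    ((tendsto_mul_log_nhdsGT_zero.comp tendsto_one_sub_nhdsLT_one).div_const 2)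
  simp only [zero_mul, zero_div, sub_zero] at this
  refine this.congr fun m => ?_
  simp only [Function.comp_apply]
  ring

end LimitsAtOne

section Modulus

variable {m x D : ℝ}

theorem legendre_relation (h0 : 0 < m) (hm : m < 1) :
    m * ellipticB m * ellipticK (1 - m) + (1 - m) * ellipticK m * ellipticB (1 - m) = π / 2 := by
  let f : ℝ → ℝ := fun m =>
    m * ellipticB m * ellipticK (1 - m) + (1 - m) * ellipticK m * ellipticB (1 - m)
  have hasDerivAt : ∀ x ∈ Ioo (0 : ℝ) 1, HasDerivAt f 0 x := fun x hx => by
    have : x ≠ 0 := hx.1.ne'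
    have : 1 - x ≠ 0 := by linarith [hx.2]
    refine ((((hasDerivAt_id x).mul (hasDerivAt_ellipticB hx.2)).mul
      (hasDerivAt_ellipticK_one_sub hx.1)).add ((((hasDerivAt_id x).const_sub 1).mul
      (hasDerivAt_ellipticK hx.2)).mul (hasDerivAt_ellipticB_one_sub hx.1))).congr_deriv ?_
    simp only [id, Pi.mul_apply]
    field_simp
    linear_combination ellipticK x * ellipticK_eq (show 1 - x < 1 by linarith [hx.1])
      - ellipticK (1 - x) * ellipticK_eq hx.2
  have eventually_eq : ∀ᶠ x in 𝓝[>] 0, f m = f x := by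
    filter_upwards [Ioo_mem_nhdsGT one_pos] with x hx
    exact isOpen_Ioo.is_const_of_deriv_eq_zero isPreconnected_Ioo
      (fun x hx => (hasDerivAt x hx).differentiableAt.differentiableWithinAt)
      (fun x hx => (hasDerivAt x hx).deriv) ⟨h0, hm⟩ hx
  have ellipticB_tendsto := (hasDerivAt_ellipticB one_pos).continuousAt.tendsto.mono_left
    (nhdsWithin_le_nhds (s := Ioi 0))
  have ellipticK_tendsto := (hasDerivAt_ellipticK one_pos).continuousAt.tendsto.mono_left
    (nhdsWithin_le_nhds (s := Ioi 0))
  have one_sub_tendsto := tendsto_nhds_of_tendsto_nhdsWithin tendsto_one_sub_nhdsGT_zero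
  have limit := ((tendsto_one_sub_mul_ellipticK_nhdsLT_one.comp tendsto_one_sub_nhdsGT_zero).mul
    ellipticB_tendsto).add ((one_sub_tendsto.mul ellipticK_tendsto).mul
      (tendsto_ellipticB_nhdsLT_one.comp tendsto_one_sub_nhdsGT_zero))
  rw [ellipticK_zero, zero_mul, zero_add, one_mul, mul_one] at limit
  refine tendsto_nhds_unique (tendsto_const_nhds.congr' eventually_eq) (limit.congr fun x => ?_)
  simp only [f, Function.comp_apply]
  ring

/-- The Grötzsch modulus `μ` in terms of the parameter `m = r²`. -/
noncomputable def modulus (m : ℝ) : ℝ :=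
  π / 2 * ellipticK (1 - m) / ellipticK m

theorem modulus_pos (h0 : 0 < m) (hm : m < 1) : 0 < modulus m :=
  div_pos (mul_pos (by positivity) (ellipticK_pos (by linarith))) (ellipticK_pos hm)

theorem hasDerivAt_modulus (h0 : 0 < m) (hm : m < 1) :
    HasDerivAt modulus (-(π ^ 2 / (8 * m * (1 - m) * ellipticK m ^ 2))) m := by
  have hK := (ellipticK_pos hm).ne'
  have : 1 - m ≠ 0 := by linarith
  refine (((hasDerivAt_ellipticK_one_sub h0).const_mul (π / 2)).div
    (hasDerivAt_ellipticK hm) hK).congr_deriv ?_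
  field_simp
  linear_combination -8 * legendre_relation h0 hm

theorem continuousOn_modulus : ContinuousOn modulus (Ioo 0 1) :=
  fun _ hx => (hasDerivAt_modulus hx.1 hx.2).continuousAt.continuousWithinAt

theorem strictAntiOn_modulus : StrictAntiOn modulus (Ioo 0 1) := by
  refine strictAntiOn_of_hasDerivWithinAt_neg (convex_Ioo 0 1) continuousOn_modulus
    (fun x hx => (hasDerivAt_modulus (interior_subset hx).1
      (interior_subset hx).2).hasDerivWithinAt) fun x hx => ?_
  rw [interior_Ioo] at hx
  have := ellipticK_pos hx.2
  have := hx.1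
  have := sub_pos.2 hx.2
  exact neg_neg_of_pos (by positivity)

/-- The logarithm of the constant `A = r' exp (μ (r'))` as a function of `m = r'²`. -/
noncomputable def logA (m : ℝ) : ℝ :=
  modulus m + log m / 2

/-- The logarithm of the constant `B = r exp ((2 / π) 𝒦(r) 𝒦'(r) - μ (r'))` as a function of
`m = r'² = 1 - r²`. -/
noncomputable def logB (m : ℝ) : ℝ :=
  2 / π * ellipticK m * ellipticK (1 - m) - modulus m + log (1 - m) / 2

theorem hasDerivAt_logA (h0 : 0 < m) (hm : m < 1) :
    HasDerivAt logA (((1 - m) * ellipticK m ^ 2 - (π / 2) ^ 2) /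
      (2 * m * (1 - m) * ellipticK m ^ 2)) m := by
  have hK := (ellipticK_pos hm).ne'
  have : 1 - m ≠ 0 := by linarith
  refine ((hasDerivAt_modulus h0 hm).add
    ((hasDerivAt_log h0.ne').div_const 2)).congr_deriv ?_
  field_simp
  ring

theorem strictAntiOn_logA : StrictAntiOn logA (Ioo 0 1) := by
  refine strictAntiOn_of_hasDerivWithinAt_neg (convex_Ioo 0 1)
    (fun x hx => (hasDerivAt_logA hx.1 hx.2).continuousAt.continuousWithinAt)
    (fun x hx => (hasDerivAt_logA (interior_subset hx).1
      (interior_subset hx).2).hasDerivWithinAt) fun x hx => ?_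
  rw [interior_Ioo] at hx
  have := ellipticK_pos hx.2
  have := hx.1
  have := sub_pos.2 hx.2
  exact div_neg_of_neg_of_pos
    (sub_neg.2 (one_sub_mul_ellipticK_pow_lt (by norm_num) hx.1 hx.2)) (by positivity)

theorem tendsto_logA_nhdsGT_zero : Tendsto logA (𝓝[>] 0) (𝓝 (log 4)) := by
  have hπ : π / 2 ≠ 0 := by positivity
  have slope_tendsto : Tendsto (slope ellipticK 0) (𝓝[>] 0) (𝓝 (ellipticB 0 / (2 * (1 - 0)))) :=
    (hasDerivAt_ellipticK one_pos).tendsto_slope.mono_left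
      (nhdsWithin_mono _ fun x hx => (mem_Ioi.1 hx).ne')
  have ellipticK_tendsto : Tendsto ellipticK (𝓝[>] 0) (𝓝 (π / 2)) := by
    rw [← ellipticK_zero]
    exact (hasDerivAt_ellipticK one_pos).continuousAt.tendsto.mono_left nhdsWithin_le_nhds
  have limit := (((tendsto_const_nhds (x := π / 2)).div ellipticK_tendsto hπ).mul
    (tendsto_ellipticK_add_log_nhdsLT_one.comp tendsto_one_sub_nhdsGT_zero)).add
    ((tendsto_mul_log_nhdsGT_zero.mul slope_tendsto).div (ellipticK_tendsto.const_mul 2)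
      (mul_ne_zero two_ne_zero hπ))
  rw [div_self hπ, one_mul, zero_mul, zero_div, add_zero] at limit
  refine limit.congr' ?_
  filter_upwards [Ioo_mem_nhdsGT one_pos] with m hm
  have := (ellipticK_pos hm.2).ne'
  have := hm.1.ne'
  simp only [Pi.div_apply, slope_def_field, ellipticK_zero, logA, modulus, Function.comp_apply,
    sub_sub_cancel, sub_zero]
  field_simp
  ring

theorem tendsto_modulus_nhdsGT_zero : Tendsto modulus (𝓝[>] 0) atTop := by
  have := tendsto_logA_nhdsGT_zero.add_atTop
    (tendsto_neg_atBot_atTop.comp (tendsto_log_nhdsGT_zero.atBot_div_const two_pos))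
  refine this.congr fun m => ?_
  simp [logA]

theorem logA_le_log_four (h0 : 0 < m) (hm : m < 1) : logA m ≤ log 4 := by
  refine ge_of_tendsto tendsto_logA_nhdsGT_zero ?_
  filter_upwards [Ioo_mem_nhdsGT h0] with x hx
  exact strictAntiOn_logA.antitoneOn ⟨hx.1, hx.2.trans hm⟩ ⟨h0, hm⟩ hx.2.le

theorem pi_div_two_le_ellipticB_mul_ellipticK (h0 : 0 < m) (hm : m ≤ 1 / 2) :
    π / 2 ≤ ellipticB m * ellipticK (1 - m) := by
  have ellipticK_mul_ellipticB_le :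
      ellipticK m * ellipticB (1 - m) ≤ ellipticB m * ellipticK (1 - m) := by
    have := antitoneOn_ellipticB_div_ellipticK ⟨h0.le, by linarith⟩
      ⟨by linarith, by linarith⟩ (show m ≤ 1 - m by linarith)
    rw [div_le_div_iff₀ (ellipticK_pos (by linarith)) (ellipticK_pos (by linarith))] at this
    linarith
  calc π / 2
      = m * (ellipticB m * ellipticK (1 - m)) + (1 - m) * (ellipticK m * ellipticB (1 - m)) := by
        rw [← legendre_relation h0 (by linarith)]
        ring
    _ ≤ m * (ellipticB m * ellipticK (1 - m)) + (1 - m) * (ellipticB m * ellipticK (1 - m)) := by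
        gcongr
        linarith
    _ = ellipticB m * ellipticK (1 - m) := by ring

theorem logA_add_logB (m : ℝ) : logA m + logB m =
    2 / π * (ellipticK m * ellipticK (1 - m)) + (log m + log (1 - m)) / 2 := by
  simp only [logA, logB]
  ring

theorem hasDerivAt_logA_add_logB (h0 : 0 < m) (hm : m < 1) :
    HasDerivAt (fun m => logA m + logB m)
      ((2 / π * (ellipticB m * ellipticK (1 - m)) - 1) / (1 - m)) m := by
  have : 1 - m ≠ 0 := by linarith
  simp only [logA_add_logB]
  refine ((((hasDerivAt_ellipticK hm).mul (hasDerivAt_ellipticK_one_sub h0)).const_mul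
    (2 / π)).add (((hasDerivAt_log h0.ne').add (((hasDerivAt_id m).const_sub 1).log
      this)).div_const 2)).congr_deriv ?_
  simp only [id]
  field_simp
  linear_combination -2 * legendre_relation h0 hm

theorem logA_add_logB_le (h0 : 0 < m) (hm : m < 1) :
    logA m + logB m ≤ log 4 + (log (1 / 8) + 2 * ellipticK (1 / 2) ^ 2 / π) := by
  have monotone : MonotoneOn (fun m => logA m + logB m) (Ioc 0 (1 / 2)) := by
    refine monotoneOn_of_hasDerivWithinAt_nonneg (convex_Ioc 0 (1 / 2))
      (fun x hx => (hasDerivAt_logA_add_logB hx.1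
        (by linarith [hx.2])).continuousAt.continuousWithinAt)
      (fun x hx => (hasDerivAt_logA_add_logB (interior_subset hx).1
        (by linarith [(interior_subset hx).2])).hasDerivWithinAt) fun x hx => ?_
    obtain ⟨hx0, hx1⟩ := interior_subset hx
    refine div_nonneg (sub_nonneg.2 ?_) (by linarith)
    have := pi_div_two_le_ellipticB_mul_ellipticK hx0 hx1
    rw [div_mul_eq_mul_div, one_le_div pi_pos]
    linarith
  have symm : ∀ x, logA (1 - x) + logB (1 - x) = logA x + logB x := fun x => by
    simp only [logA_add_logB, sub_sub_cancel]
    ring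
  have value_half : logA (1 / 2) + logB (1 / 2) =
      log 4 + (log (1 / 8) + 2 * ellipticK (1 / 2) ^ 2 / π) := by
    have log_half : log (1 / 2) = log 4 + log (1 / 8) := by
      rw [← log_mul (by norm_num) (by norm_num)]
      norm_num
    rw [logA_add_logB, show (1 - 1 / 2 : ℝ) = 1 / 2 by norm_num, ← add_assoc, ← log_half]
    ring
  rw [← value_half]
  rcases le_total m (1 / 2) with h | h
  · exact monotone ⟨h0, h⟩ ⟨by norm_num, le_rfl⟩ h
  · rw [← symm m]
    exact monotone ⟨by linarith, by linarith⟩ ⟨by norm_num, le_rfl⟩ (by linarith)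

/-- The constant `D` for which `m` is a critical point of `logDistortion D`. -/
noncomputable def criticalConst (m : ℝ) : ℝ :=
  ellipticK (1 - m) ^ 2 - modulus m ^ 2

theorem criticalConst_eq (hm : m < 1) :
    criticalConst m = modulus m * (logB m - log (1 - m) / 2) := by
  have := (ellipticK_pos hm).ne'
  simp only [criticalConst, logB, modulus]
  field_simp
  ring

theorem strictMonoOn_criticalConst : StrictMonoOn criticalConst (Ioo 0 1) := by
  have hasDerivAt : ∀ x ∈ Ioo (0 : ℝ) 1, HasDerivAt criticalConst
      (ellipticK (1 - x) / (x * (1 - x) * ellipticK x ^ 3) *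
        ((π / 2) ^ 3 - (1 - x) * ellipticK x ^ 3 * ellipticB (1 - x))) x := fun x hx => by
    have := hx.1.ne'
    have := (sub_pos.2 hx.2).ne'
    have := (ellipticK_pos hx.2).ne'
    refine (((hasDerivAt_ellipticK_one_sub hx.1).pow 2).sub
      ((hasDerivAt_modulus hx.1 hx.2).pow 2)).congr_deriv ?_
    simp only [modulus, Nat.add_one_sub_one, pow_one]
    field_simp
    ring
  refine strictMonoOn_of_hasDerivWithinAt_pos (convex_Ioo 0 1)
    (fun x hx => (hasDerivAt x hx).continuousAt.continuousWithinAt)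
    (fun x hx => (hasDerivAt x (interior_subset hx)).hasDerivWithinAt) fun x hx => ?_
  rw [interior_Ioo] at hx
  have hx0 := hx.1
  have hx1 := sub_pos.2 hx.2
  have := ellipticK_pos hx.2
  have := ellipticK_pos (show 1 - x < 1 by linarith)
  refine mul_pos (by positivity) (sub_pos.2 ?_)
  calc (1 - x) * ellipticK x ^ 3 * ellipticB (1 - x) ≤ (1 - x) * ellipticK x ^ 3 :=
        mul_le_of_le_one_right (by positivity) (ellipticB_le_one (by linarith))
    _ < (π / 2) ^ 3 := one_sub_mul_ellipticK_pow_lt (by norm_num) hx.1 hx.2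

/-- For `D = criticalConst (1 / (1 + t))` this is `log (g κ)` as a function of the parameter
`m = u²` of the solution `u` of `μ u = κ μ (1 / √(1 + t))`. -/
noncomputable def logDistortion (D m : ℝ) : ℝ :=
  log (1 - m) / 2 - logA m + D / modulus m

theorem hasDerivAt_logDistortion (h0 : 0 < m) (hm : m < 1) :
    HasDerivAt (logDistortion D)
      (π ^ 2 / (8 * m * (1 - m) * ellipticK m ^ 2 * modulus m ^ 2) * (D - criticalConst m)) m := by
  have hK := (ellipticK_pos hm).ne'
  have hM := (modulus_pos h0 hm).ne'
  have : 1 - m ≠ 0 := by linarith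
  refine (((((hasDerivAt_id m).const_sub 1).log this).div_const 2).sub
    (hasDerivAt_logA h0 hm)).add ((hasDerivAt_const m D).div (hasDerivAt_modulus h0 hm) hM)
    |>.congr_deriv ?_
  have modulus_mul : modulus m * ellipticK m = π / 2 * ellipticK (1 - m) :=
    div_mul_cancel₀ _ hK
  simp only [id, criticalConst]
  field_simp
  linear_combination -32 * (modulus m * ellipticK m + π / 2 * ellipticK (1 - m)) * modulus_mul

theorem continuousOn_logDistortion (D : ℝ) : ContinuousOn (logDistortion D) (Ioo 0 1) :=
  fun _ hx => (hasDerivAt_logDistortion hx.1 hx.2).continuousAt.continuousWithinAt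

theorem strictMonoOn_logDistortion (hm : m < 1) :
    StrictMonoOn (logDistortion (criticalConst m)) (Ioc 0 m) := by
  have subset_Ioo : Ioc 0 m ⊆ Ioo 0 1 := fun x hx => ⟨hx.1, hx.2.trans_lt hm⟩
  refine strictMonoOn_of_hasDerivWithinAt_pos (convex_Ioc 0 m)
    ((continuousOn_logDistortion _).mono subset_Ioo)
    (fun x hx => (hasDerivAt_logDistortion (subset_Ioo (interior_subset hx)).1
      (subset_Ioo (interior_subset hx)).2).hasDerivWithinAt) fun x hx => ?_
  rw [interior_Ioc] at hx
  have hx' := subset_Ioo ⟨hx.1, hx.2.le⟩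
  have := ellipticK_pos hx'.2
  have := modulus_pos hx'.1 hx'.2
  have := hx'.1
  have := sub_pos.2 hx'.2
  exact mul_pos (by positivity)
    (sub_pos.2 (strictMonoOn_criticalConst hx' ⟨hx.1.trans hx.2, hm⟩ hx.2))

theorem tendsto_logDistortion_nhdsGT_zero (D : ℝ) :
    Tendsto (logDistortion D) (𝓝[>] 0) (𝓝 (-log 4)) := by
  have log_tendsto := (tendsto_nhds_of_tendsto_nhdsWithin tendsto_one_sub_nhdsGT_zero).log
    one_ne_zero
  have limit := ((log_tendsto.div_const 2).sub tendsto_logA_nhdsGT_zero).add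
    (tendsto_modulus_nhdsGT_zero.const_div_atTop D)
  rwa [log_one, zero_div, zero_sub, add_zero] at limit

theorem logDistortion_criticalConst_self (h0 : 0 < m) (hm : m < 1) :
    logDistortion (criticalConst m) m = logB m - logA m := by
  rw [logDistortion, criticalConst_eq hm, mul_div_cancel_left₀ _ (modulus_pos h0 hm).ne']
  ring

end Modulus

section Order

variable {α β γ : Type*}

theorem image_Ioc_of_strictMonoOn_of_tendsto_nhds [ConditionallyCompleteLinearOrder α]
    [TopologicalSpace α] [OrderTopology α] [DenselyOrdered α] [LinearOrder β] [TopologicalSpace β]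
    [OrderClosedTopology β] {f : α → β} {a b : α} {l : β} (hab : a < b)
    (hf : StrictMonoOn f (Ioc a b)) (hf_cont : ContinuousOn f (Ioc a b))
    (hl : Tendsto f (𝓝[>] a) (𝓝 l)) : f '' Ioc a b = Ioc l (f b) := by
  have := nhdsGT_neBot_of_exists_gt ⟨b, hab⟩
  refine Subset.antisymm ?_ (isPreconnected_Ioc.intermediate_value_Ioc (right_mem_Ioc.2 hab)
    (le_principal_iff.2 (Ioc_mem_nhdsGT hab)) hf_cont hl)
  rintro _ ⟨x, hx, rfl⟩
  obtain ⟨y, hay, hyx⟩ := exists_between hx.1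
  have hy : y ∈ Ioc a b := ⟨hay, hyx.le.trans hx.2⟩
  have l_le : l ≤ f y := by
    refine le_of_tendsto hl ?_
    filter_upwards [Ioc_mem_nhdsGT hay] with z hz
    exact hf.monotoneOn ⟨hz.1, hz.2.trans hy.2⟩ hy hz.2
  exact ⟨l_le.trans_lt (hf hy hx hyx), hf.monotoneOn hx (right_mem_Ioc.2 hab) hx.2⟩

theorem image_Ioc_of_antitoneOn_of_tendsto_atTop [ConditionallyCompleteLinearOrder α]
    [TopologicalSpace α] [OrderTopology α] [DenselyOrdered α] [LinearOrder β] [TopologicalSpace β]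
    [OrderClosedTopology β] {f : α → β} {a b : α} (hab : a < b)
    (hf : AntitoneOn f (Ioc a b)) (hf_cont : ContinuousOn f (Ioc a b))
    (hl : Tendsto f (𝓝[>] a) atTop) : f '' Ioc a b = Ici (f b) := by
  have := nhdsGT_neBot_of_exists_gt ⟨b, hab⟩
  refine Subset.antisymm ?_ (isPreconnected_Ioc.intermediate_value_Ici (right_mem_Ioc.2 hab)
    (le_principal_iff.2 (Ioc_mem_nhdsGT hab)) hf_cont hl)
  rintro _ ⟨x, hx, rfl⟩
  exact hf hx (right_mem_Ioc.2 hab) hx.2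

theorem strictAntiOn_image_of_comp_eq [LinearOrder α] [Preorder β] [Preorder γ] {s : Set α}
    {κ : α → β} {F : α → γ} {g : β → γ} (hκ : StrictAntiOn κ s) (hF : StrictMonoOn F s)
    (hg : ∀ x ∈ s, g (κ x) = F x) : StrictAntiOn g (κ '' s) := by
  rintro _ ⟨x, hx, rfl⟩ _ ⟨y, hy, rfl⟩ hxy
  rw [hg x hx, hg y hy]
  exact hF hy hx ((hκ.lt_iff_gt hx hy).1 hxy)

theorem tendsto_atTop_of_antitoneOn_Ici_of_isGLB [LinearOrder α] [TopologicalSpace β] [Preorder β]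
    [InfConvergenceClass β] {g : α → β} {a : α} {l : β} (hg : AntitoneOn g (Ici a))
    (hl : IsGLB (g '' Ici a) l) : Tendsto g atTop (𝓝 l) := by
  rw [← tendsto_comp_val_Ici_atTop (a := a)]
  rw [image_eq_range] at hl
  exact tendsto_atTop_isGLB (fun x y hxy => hg x.2 y.2 hxy) hl

end Order

section PowerBounds

variable {A B K X c q : ℝ}

theorem lt_and_lt_of_rpow_mul_rpow_mul_sqrt_mem_Ioo (hA : 0 < A) (hB : 0 < B) (hq : 0 ≤ q)
    (h : A ^ (-K) * B ^ (1 / K) * X ^ (1 / 2 : ℝ) ∈ Ioo q (B / A)) :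
    q ^ 2 * A ^ (2 * K) * B ^ (-(2 / K)) < X ∧
      X < A ^ (2 * (K - 1)) * B ^ (2 * (1 - 1 / K)) := by
  rw [← sqrt_eq_rpow] at h
  obtain ⟨lower, upper⟩ := h
  have hX : 0 < X := sqrt_pos.1 (pos_of_mul_pos_right (hq.trans_lt lower) (by positivity))
  have X_eq : X = (A ^ (-K) * B ^ (1 / K) * √X) ^ 2 * (A ^ (2 * K) * B ^ (-(2 / K))) := by
    have A_cancel : (A ^ (-K)) ^ 2 * A ^ (2 * K) = 1 := by
      rw [← rpow_natCast, ← rpow_mul hA.le, ← rpow_add hA]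
      simp [mul_comm]
    have B_cancel : (B ^ (1 / K)) ^ 2 * B ^ (-(2 / K)) = 1 := by
      rw [← rpow_natCast, ← rpow_mul hB.le, ← rpow_add hB]
      simp [div_eq_inv_mul]
    linear_combination -(sq_sqrt hX.le)
      - √X ^ 2 * ((B ^ (1 / K)) ^ 2 * B ^ (-(2 / K)) * A_cancel + B_cancel)
  have upper_eq : A ^ (2 * (K - 1)) * B ^ (2 * (1 - 1 / K)) =
      (B / A) ^ 2 * (A ^ (2 * K) * B ^ (-(2 / K))) := by
    rw [show 2 * (K - 1) = 2 * K - 2 by ring, show 2 * (1 - 1 / K) = 2 + -(2 / K) by ring,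
      rpow_sub hA, rpow_add hB, rpow_two, rpow_two]
    ring
  rw [mul_assoc, upper_eq]
  constructor
  · calc q ^ 2 * (A ^ (2 * K) * B ^ (-(2 / K))) < _ := by gcongr
      _ = X := X_eq.symm
  · calc X = _ := X_eq
      _ < (B / A) ^ 2 * (A ^ (2 * K) * B ^ (-(2 / K))) := by
        have := hq.trans lower.le
        gcongr

theorem rpow_mul_rpow_eq (hA : 0 < A) (hB : 0 < B) (hK : K ≠ 0) :
    A ^ (2 * (K - 1)) * B ^ (2 * (1 - 1 / K)) = (A ^ (K - 1) * (A * B)) ^ (2 * (1 - 1 / K)) := by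
  rw [← mul_assoc, ← rpow_add_one hA.ne', mul_rpow (by positivity) hB.le, ← rpow_mul hA.le]
  congr 2
  field_simp
  ring

theorem rpow_mul_rpow_le (hA : 0 < A) (hB : 0 < B) (hc : 0 < c) (hK : 1 ≤ K) (hAq : A ≤ q)
    (hABq : A * B ≤ q * c) :
    A ^ (2 * (K - 1)) * B ^ (2 * (1 - 1 / K)) ≤ (q ^ 2) ^ (K - 1) * c ^ (2 * (1 - 1 / K)) := by
  have hq : 0 < q := hA.trans_le hAq
  have hK0 : K ≠ 0 := by linarith
  have exponent_nonneg : 0 ≤ 1 - 1 / K := sub_nonneg.2 (div_le_one_of_le₀ hK (by linarith))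
  rw [← rpow_two, ← rpow_mul hq.le, rpow_mul_rpow_eq hA hB hK0, rpow_mul_rpow_eq hq hc hK0]
  have := sub_nonneg.2 hK
  gcongr

end PowerBounds

section Distortion

variable {m m₀ K : ℝ}

theorem ellK_eq_ellipticK (r : ℝ) : ellK r = ellipticK (r ^ 2) := by
  simp [ellK, ellipticK, legendreIntegral]

theorem mu_sqrt (h0 : 0 ≤ m) (hm : m ≤ 1) : mu √m = modulus m := by
  simp only [mu, modulus, ellK_eq_ellipticK, sq_sqrt h0, sq_sqrt (sub_nonneg.2 hm)]

theorem exp_logA (h0 : 0 < m) (hm : m ≤ 1) : exp (logA m) = √m * exp (mu √m) := by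
  rw [logA, mu_sqrt h0.le hm, ← log_sqrt h0.le, exp_add, exp_log (sqrt_pos.2 h0), mul_comm]

theorem exp_logB (h0 : 0 ≤ m) (hm : m < 1) : exp (logB m) =
    √(1 - m) * exp (2 / π * ellK √(1 - m) * ellK √m - mu √m) := by
  have := sub_pos.2 hm
  rw [logB, mu_sqrt h0 hm.le, ← log_sqrt this.le, exp_add, exp_log (sqrt_pos.2 this), mul_comm,
    ellK_eq_ellipticK, ellK_eq_ellipticK, sq_sqrt h0, sq_sqrt this.le, mul_right_comm]

theorem exp_logA_le_four (h0 : 0 < m) (hm : m < 1) : exp (logA m) ≤ 4 := by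
  rw [← le_log_iff_exp_le (by norm_num)]
  exact logA_le_log_four h0 hm

theorem exp_logA_mul_exp_logB_le (h0 : 0 < m) (hm : m < 1) : exp (logA m) * exp (logB m) ≤
    4 * (1 / 8 * exp (2 * ellK (1 / √2) ^ 2 / π)) := by
  calc exp (logA m) * exp (logB m) = exp (logA m + logB m) := (exp_add _ _).symm
    _ ≤ exp (log 4 + (log (1 / 8) + 2 * ellipticK (1 / 2) ^ 2 / π)) :=
        exp_le_exp.2 (logA_add_logB_le h0 hm)
    _ = 4 * (1 / 8 * exp (2 * ellK (1 / √2) ^ 2 / π)) := by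
        rw [exp_add, exp_add, exp_log (by norm_num), exp_log (by norm_num), ellK_eq_ellipticK,
          div_pow, one_pow, sq_sqrt zero_le_two]

theorem rpow_mul_rpow_mul_rpow_eq_exp_logDistortion (hm : m ∈ Ioo 0 1) (hm₀ : m₀ ∈ Ioo 0 1)
    (hK : modulus m = K * modulus m₀) :
    exp (logA m₀) ^ (-K) * exp (logB m₀) ^ (1 / K) *
      ((1 / m - 1) / ((1 / m₀ - 1) ^ (1 / K) * (1 / m₀) ^ (K - 1 / K))) ^ (1 / 2 : ℝ) =
    exp (logDistortion (criticalConst m₀) m) := by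
  have one_div_sub_one : ∀ x ∈ Ioo (0 : ℝ) 1, 1 / x - 1 = exp (log (1 - x) - log x) :=
    fun x hx => by
      rw [exp_sub, exp_log hx.1, exp_log (sub_pos.2 hx.2), sub_div, div_self hx.1.ne']
  have one_div_eq : 1 / m₀ = exp (-log m₀) := by rw [exp_neg, exp_log hm₀.1, one_div]
  have hM₀ := (modulus_pos hm₀.1 hm₀.2).ne'
  have hK0 : K ≠ 0 := by
    rintro rfl
    exact (modulus_pos hm.1 hm.2).ne' (by rw [hK, zero_mul])
  rw [one_div_sub_one m hm, one_div_sub_one m₀ hm₀, one_div_eq]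
  simp only [← exp_mul, ← exp_add, ← exp_sub]
  rw [logDistortion, criticalConst_eq hm₀.2, hK, logA, logA, hK]
  congr 1
  field_simp
  ring

theorem image_modulus_div (hm₀ : m₀ ∈ Ioo 0 1) :
    (fun m => modulus m / modulus m₀) '' Ioc 0 m₀ = Ici 1 := by
  have hM₀ := modulus_pos hm₀.1 hm₀.2
  have subset_Ioo : Ioc 0 m₀ ⊆ Ioo 0 1 := fun x hx => ⟨hx.1, hx.2.trans_lt hm₀.2⟩
  have := image_Ioc_of_antitoneOn_of_tendsto_atTop (f := fun m => modulus m / modulus m₀) hm₀.1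
    (fun x hx y hy hxy => div_le_div_of_nonneg_right (strictAntiOn_modulus.antitoneOn
      (subset_Ioo hx) (subset_Ioo hy) hxy) hM₀.le)
    ((continuousOn_modulus.mono subset_Ioo).div_const _)
    (tendsto_modulus_nhdsGT_zero.atTop_div_const hM₀)
  rwa [div_self hM₀.ne'] at this

theorem image_exp_logDistortion (hm₀ : m₀ ∈ Ioo 0 1) :
    (fun m => exp (logDistortion (criticalConst m₀) m)) '' Ioc 0 m₀ =
      Ioc (1 / 4) (exp (logB m₀) / exp (logA m₀)) := by
  have exp_neg_log_four : exp (-log 4) = 1 / 4 := by rw [exp_neg, exp_log (by norm_num), one_div]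
  rw [← exp_neg_log_four, ← exp_sub, ← logDistortion_criticalConst_self hm₀.1 hm₀.2]
  exact image_Ioc_of_strictMonoOn_of_tendsto_nhds hm₀.1
    (exp_strictMono.comp_strictMonoOn (strictMonoOn_logDistortion hm₀.2))
    (continuous_exp.comp_continuousOn ((continuousOn_logDistortion _).mono
      fun x hx => ⟨hx.1, hx.2.trans_lt hm₀.2⟩))
    ((continuous_exp.tendsto _).comp (tendsto_logDistortion_nhdsGT_zero _))

theorem eq_one_div_sub_one_of_mu_eq {η : ℝ → ℝ} (hm : m ∈ Ioo 0 1) (hm₀ : m₀ ∈ Ioo 0 1)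
    (hη : ∀ K, 0 < K → ∀ u ∈ Ioo (0 : ℝ) 1, mu u = K * mu √m₀ → η K = 1 / u ^ 2 - 1) :
    η (modulus m / modulus m₀) = 1 / m - 1 := by
  have hM := modulus_pos hm.1 hm.2
  have hM₀ := modulus_pos hm₀.1 hm₀.2
  rw [hη _ (div_pos hM hM₀) √m ⟨sqrt_pos.2 hm.1, (sqrt_lt' one_pos).2 (by linarith [hm.2])⟩,
    sq_sqrt hm.1.le]
  rw [mu_sqrt hm.1.le hm.2.le, mu_sqrt hm₀.1.le hm₀.2.le, div_mul_cancel₀ _ hM₀.ne']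

end Distortion

section ModulusRatio

variable {m₀ K : ℝ} {g : ℝ → ℝ} (hm₀ : m₀ ∈ Ioo 0 1)
  (hg : ∀ m ∈ Ioc 0 m₀, g (modulus m / modulus m₀) = exp (logDistortion (criticalConst m₀) m))

include hm₀ hg

theorem strictAntiOn_of_modulus_div : StrictAntiOn g (Ici 1) := by
  rw [← image_modulus_div hm₀]
  refine strictAntiOn_image_of_comp_eq (fun x hx y hy hxy => ?_)
    (exp_strictMono.comp_strictMonoOn (strictMonoOn_logDistortion hm₀.2)) hg
  exact div_lt_div_of_pos_right (strictAntiOn_modulus ⟨hx.1, hx.2.trans_lt hm₀.2⟩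
    ⟨hy.1, hy.2.trans_lt hm₀.2⟩ hxy) (modulus_pos hm₀.1 hm₀.2)

theorem image_Ici_of_modulus_div : g '' Ici 1 = Ioc (1 / 4) (exp (logB m₀) / exp (logA m₀)) := by
  rw [← image_modulus_div hm₀, image_image, ← image_exp_logDistortion hm₀]
  exact image_congr hg

theorem apply_one_of_modulus_div : g 1 = exp (logB m₀) / exp (logA m₀) := by
  rw [← exp_sub, ← logDistortion_criticalConst_self hm₀.1 hm₀.2, ← hg m₀ ⟨hm₀.1, le_rfl⟩,
    div_self (modulus_pos hm₀.1 hm₀.2).ne']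

theorem tendsto_atTop_of_modulus_div : Tendsto g atTop (𝓝 (1 / 4)) := by
  have image_eq := image_Ici_of_modulus_div hm₀ hg
  have nonempty : (Ioc (1 / 4) (exp (logB m₀) / exp (logA m₀))).Nonempty :=
    image_eq ▸ nonempty_Ici.image g
  exact tendsto_atTop_of_antitoneOn_Ici_of_isGLB (strictAntiOn_of_modulus_div hm₀ hg).antitoneOn
    (image_eq ▸ isGLB_Ioc (nonempty_Ioc.1 nonempty))

theorem apply_mem_Ioo_of_modulus_div (hK : 1 < K) :
    g K ∈ Ioo (1 / 4) (exp (logB m₀) / exp (logA m₀)) := by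
  have mem_Ioc : g K ∈ Ioc (1 / 4) (exp (logB m₀) / exp (logA m₀)) :=
    image_Ici_of_modulus_div hm₀ hg ▸ mem_image_of_mem g hK.le
  refine ⟨mem_Ioc.1, ?_⟩
  rw [← apply_one_of_modulus_div hm₀ hg]
  exact strictAntiOn_of_modulus_div hm₀ hg self_mem_Ici hK.le hK

end ModulusRatio

theorem stmt_18 (eta : ℝ → ℝ → ℝ)
    (heta : ∀ K t : ℝ, 0 < K → 0 < t → ∀ u ∈ Set.Ioo (0:ℝ) 1,
      mu u = K * mu (1 / Real.sqrt (1 + t)) → eta K t = 1 / u ^ 2 - 1) (t : ℝ) (ht : 0 < t) (A B c : ℝ)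
    (hA : A = 1 / Real.sqrt (1 + t) * Real.exp (mu (1 / Real.sqrt (1 + t))))
    (hB : B = Real.sqrt (t / (1 + t)) * Real.exp (2 / Real.pi * ellK (Real.sqrt (t / (1 + t))) *
      ellK (1 / Real.sqrt (1 + t)) - mu (1 / Real.sqrt (1 + t))))
    (hc : c = 1 / 8 * Real.exp (2 * ellK (1 / Real.sqrt 2) ^ 2 / Real.pi)) (g : ℝ → ℝ)
    (hg : g = fun K : ℝ => A ^ (-K) * B ^ (1 / K) *
      (eta K t / (t ^ (1 / K) * (1 + t) ^ (K - 1 / K))) ^ ((1:ℝ) / 2)) :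
    StrictAntiOn g (Set.Ici 1) ∧ g 1 = B / A ∧
    Filter.Tendsto g Filter.atTop (nhds (1 / 4)) ∧
    g '' Set.Ici 1 = Set.Ioc (1 / 4) (B / A) ∧
    ∀ K : ℝ, 1 < K →
      1 / 16 * A ^ (2 * K) * B ^ (-(2 / K)) <
        eta K t / (t ^ (1 / K) * (1 + t) ^ (K - 1 / K)) ∧
      eta K t / (t ^ (1 / K) * (1 + t) ^ (K - 1 / K)) <
        A ^ (2 * (K - 1)) * B ^ (2 * (1 - 1 / K)) ∧
      A ^ (2 * (K - 1)) * B ^ (2 * (1 - 1 / K)) ≤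
        (16:ℝ) ^ (K - 1) * c ^ (2 * (1 - 1 / K)) := by
  obtain ⟨m₀, hm₀, rfl⟩ : ∃ m₀ ∈ Ioo (0 : ℝ) 1, t = 1 / m₀ - 1 :=
    ⟨1 / (1 + t), ⟨by positivity, (div_lt_one (by positivity)).2 (by linarith)⟩, by simp⟩
  have inv_sqrt_eq : 1 / √(1 / m₀) = √m₀ := by simp
  have r_sq_eq : (1 / m₀ - 1) / (1 / m₀) = 1 - m₀ := by field_simp [hm₀.1.ne']
  rw [add_sub_cancel, inv_sqrt_eq, ← exp_logA hm₀.1 hm₀.2.le] at hA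
  rw [add_sub_cancel, inv_sqrt_eq, r_sq_eq, ← exp_logB hm₀.1.le hm₀.2] at hB
  simp only [add_sub_cancel] at hg ⊢
  subst hA hB hc
  have g_modulus_div : ∀ m ∈ Ioc 0 m₀,
      g (modulus m / modulus m₀) = exp (logDistortion (criticalConst m₀) m) := fun m hm => by
    have hm' : m ∈ Ioo 0 1 := ⟨hm.1, hm.2.trans_lt hm₀.2⟩
    simp only [hg, eq_one_div_sub_one_of_mu_eq (η := (eta · _)) hm' hm₀ fun K hK u hu h =>
      heta K _ hK ht u hu (by rwa [add_sub_cancel, inv_sqrt_eq])]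
    exact rpow_mul_rpow_mul_rpow_eq_exp_logDistortion hm' hm₀
      (div_mul_cancel₀ _ (modulus_pos hm₀.1 hm₀.2).ne').symm
  refine ⟨strictAntiOn_of_modulus_div hm₀ g_modulus_div, apply_one_of_modulus_div hm₀ g_modulus_div,
    tendsto_atTop_of_modulus_div hm₀ g_modulus_div, image_Ici_of_modulus_div hm₀ g_modulus_div,
    fun K hK => ?_⟩
  obtain ⟨lower, upper⟩ := lt_and_lt_of_rpow_mul_rpow_mul_sqrt_mem_Ioo (exp_pos _) (exp_pos _)
    (by norm_num) (hg ▸ apply_mem_Ioo_of_modulus_div hm₀ g_modulus_div hK)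
  rw [show (16 : ℝ) = 4 ^ 2 by norm_num, ← one_div_pow]
  exact ⟨lower, upper, rpow_mul_rpow_le (exp_pos _) (exp_pos _) (by positivity) hK.le
    (exp_logA_le_four hm₀.1 hm₀.2) (exp_logA_mul_exp_logB_le hm₀.1 hm₀.2)⟩
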